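/- Let 0 < λ be a real number. For every η with 0 < η < λ, the spectral flux density of the genus-0 KdV soliton condensate, v(μ) = 6μ(2μ² − λ²)/(π·√(λ² − μ²)) on (0, λ), satisfies the nonlinear dispersion relation ∫₀^λ ln((μ + η)/|μ − η|) · 6μ(2μ² − λ²)/(π·√(λ² − μ²)) dμ = 4η³. -/

import Mathlib

/-!
The integrand has an elementary primitive. Put `s = √(λ² - μ²)`, `k = √(λ² - η²)`, `C = 2η² + λ²`.
The density `v` has primitive `V(μ) = -(2/π)(2μ² + λ²) s`, and integrating `log((μ+η)/|μ-η|) v(μ)`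
by parts, with the constant of integration chosen as `-V(η)`, leaves a remainder that integrates to
logarithms and an arcsine. The resulting primitive is
`condensatePrimitive`. The choice `V(μ) - V(η)` makes the only logarithmic singularity, at `μ = η`,
appear as `(μ - η) log|μ - η|`, so the primitive is continuous on `[0, λ]`
(`continuousOn_condensatePrimitive`); it is differentiable on `(0, λ) \ {η}` with the right
derivative (`hasDerivAt_condensatePrimitive`), and the integrand is integrable
(`intervalIntegrable_condensate`). The fundamental theorem of calculus with a countable exceptional
set then gives the integral as a difference of end point values, where the logarithms cancel and
the arcsine contributes `(8η³/π)(π/2) = 4η³`.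
-/

/-- A primitive in `μ` of `log((μ+η)/|μ-η|) v(μ)` on `[0, lam]`. Since `Real.log x = log |x|`, no
absolute value is needed around `μ - η`. -/
noncomputable def condensatePrimitive (lam η μ : ℝ) : ℝ :=
  (Real.log (μ + η) - Real.log (μ - η)) *
      (-(2 / Real.pi) * ((2 * μ ^ 2 + lam ^ 2) * Real.sqrt (lam ^ 2 - μ ^ 2)
        - (2 * η ^ 2 + lam ^ 2) * Real.sqrt (lam ^ 2 - η ^ 2)))
    - (4 / Real.pi) * ((2 * η ^ 2 + lam ^ 2) * Real.sqrt (lam ^ 2 - η ^ 2)) *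
      (Real.log (μ + η)
        - Real.log (Real.sqrt (lam ^ 2 - η ^ 2) * μ + η * Real.sqrt (lam ^ 2 - μ ^ 2)))
    - (4 * η / Real.pi) * (μ * Real.sqrt (lam ^ 2 - μ ^ 2) - 2 * η ^ 2 * Real.arcsin (μ / lam))

lemma hasDerivAt_sqrt_sq_sub_sq {lam μ : ℝ} (h0 : 0 < μ) (h1 : μ < lam) :
    HasDerivAt (fun x : ℝ => Real.sqrt (lam ^ 2 - x ^ 2)) (-μ / Real.sqrt (lam ^ 2 - μ ^ 2)) μ := by
  have hpos : 0 < lam ^ 2 - μ ^ 2 := by nlinarith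
  have h := (((hasDerivAt_id μ).pow 2).const_sub (lam ^ 2)).sqrt hpos.ne'
  have hs : Real.sqrt (lam ^ 2 - μ ^ 2) ≠ 0 := (Real.sqrt_pos.2 hpos).ne'
  refine h.congr_deriv ?_
  simp only [id, Pi.pow_apply]
  field_simp
  push_cast
  ring

lemma hasDerivAt_arcsin_div {lam μ : ℝ} (h0 : 0 < μ) (h1 : μ < lam) :
    HasDerivAt (fun x : ℝ => Real.arcsin (x / lam)) (1 / Real.sqrt (lam ^ 2 - μ ^ 2)) μ := by
  have hl : 0 < lam := h0.trans h1
  have hlt : μ / lam < 1 := (div_lt_one hl).2 h1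
  have hgt : 0 < μ / lam := div_pos h0 hl
  have h := (Real.hasDerivAt_arcsin (x := μ / lam) (by linarith) hlt.ne).comp μ
    ((hasDerivAt_id μ).div_const lam)
  refine h.congr_deriv ?_
  have hs : Real.sqrt (lam ^ 2 - μ ^ 2) = lam * Real.sqrt (1 - (μ / lam) ^ 2) := by
    rw [← Real.sqrt_sq hl.le, ← Real.sqrt_mul (sq_nonneg _), Real.sqrt_sq hl.le]
    congr 1
    field_simp
  rw [hs, div_mul_div_comm, mul_one, mul_comm]

lemma hasDerivAt_condensatePrimitive {lam η μ : ℝ} (hη0 : 0 < η) (hηlam : η < lam)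
    (h0 : 0 < μ) (h1 : μ < lam) (hne : μ ≠ η) :
    HasDerivAt (condensatePrimitive lam η)
      ((Real.log (μ + η) - Real.log (μ - η)) *
        (6 * μ * (2 * μ ^ 2 - lam ^ 2) / (Real.pi * Real.sqrt (lam ^ 2 - μ ^ 2)))) μ := by
  have hs' := hasDerivAt_sqrt_sq_sub_sq h0 h1
  have ha' := hasDerivAt_arcsin_div h0 h1
  have hsp : 0 < Real.sqrt (lam ^ 2 - μ ^ 2) := Real.sqrt_pos.2 (by nlinarith)
  have hkp : 0 < Real.sqrt (lam ^ 2 - η ^ 2) := Real.sqrt_pos.2 (by nlinarith)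
  have hs2 : Real.sqrt (lam ^ 2 - μ ^ 2) ^ 2 = lam ^ 2 - μ ^ 2 := Real.sq_sqrt (by nlinarith)
  have hk2 : Real.sqrt (lam ^ 2 - η ^ 2) ^ 2 = lam ^ 2 - η ^ 2 := Real.sq_sqrt (by nlinarith)
  have hp : μ + η ≠ 0 := by positivity
  have hm : μ - η ≠ 0 := sub_ne_zero.2 hne
  have hid : HasDerivAt (fun x : ℝ => x) 1 μ := hasDerivAt_id μ
  have hL1 := (hid.add_const η).log hp
  have hL2 := (hid.sub_const η).log hm
  have hq : Real.sqrt (lam ^ 2 - η ^ 2) * μ + η * Real.sqrt (lam ^ 2 - μ ^ 2) ≠ 0 := by positivity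
  have hL3 := ((hid.const_mul (Real.sqrt (lam ^ 2 - η ^ 2))).add (hs'.const_mul η)).log hq
  have hV := ((((((hid.pow 2).const_mul 2).add_const (lam ^ 2)).mul hs').sub_const
    ((2 * η ^ 2 + lam ^ 2) * Real.sqrt (lam ^ 2 - η ^ 2))).const_mul (-(2 / Real.pi)))
  have h := (((hL1.sub hL2).mul hV).sub
    ((hL1.sub hL3).const_mul
      ((4 / Real.pi) * ((2 * η ^ 2 + lam ^ 2) * Real.sqrt (lam ^ 2 - η ^ 2))))).sub
    (((hid.mul hs').sub (ha'.const_mul (2 * η ^ 2))).const_mul (4 * η / Real.pi))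
  refine h.congr_deriv ?_
  simp only [Pi.mul_apply, Pi.add_apply, Pi.sub_apply, Pi.pow_apply]
  have hpi := Real.pi_ne_zero
  generalize Real.sqrt (lam ^ 2 - μ ^ 2) = s at *
  generalize Real.sqrt (lam ^ 2 - η ^ 2) = k at *
  generalize Real.log (μ + η) - Real.log (μ - η) = L at *
  have hs0 := hsp.ne'
  -- Rationalise with `(k μ - η s)(k μ + η s) = lam² (μ² - η²)`.
  have hrat : (k * 1 + η * (-μ / s)) / (k * μ + η * s)
      = (s * μ - k * η) / (s * ((μ + η) * (μ - η))) := by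
    rw [div_eq_div_iff hq (by positivity)]
    field_simp
    linear_combination (η * μ) * (hk2 - hs2)
  rw [hrat]
  field_simp
  push_cast
  linear_combination
    (4 * η * (2 * μ ^ 2 + lam ^ 2) - 8 * μ * (μ ^ 2 - η ^ 2) * L - 4 * η * (μ ^ 2 - η ^ 2)) * hs2
      - 4 * η * (2 * η ^ 2 + lam ^ 2) * hk2

lemma continuousOn_condensatePrimitive {lam η : ℝ} (hη0 : 0 < η) (hηlam : η < lam) :
    ContinuousOn (condensatePrimitive lam η) (Set.Icc 0 lam) := by
  have hkp : 0 < Real.sqrt (lam ^ 2 - η ^ 2) := Real.sqrt_pos.2 (by nlinarith)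
  have hk2 : Real.sqrt (lam ^ 2 - η ^ 2) ^ 2 = lam ^ 2 - η ^ 2 := Real.sq_sqrt (by nlinarith)
  have hlam : 0 < lam := hη0.trans hηlam
  have hlogp : ContinuousOn (fun μ : ℝ => Real.log (μ + η)) (Set.Icc 0 lam) :=
    ContinuousOn.log (by fun_prop) fun x hx => by have := hx.1; positivity
  have hlogq : ContinuousOn (fun μ : ℝ => Real.log (Real.sqrt (lam ^ 2 - η ^ 2) * μ
      + η * Real.sqrt (lam ^ 2 - μ ^ 2))) (Set.Icc 0 lam) := by
    refine ContinuousOn.log (by fun_prop) fun x hx => ?_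
    rcases hx.1.eq_or_lt with rfl | h
    · have : 0 < Real.sqrt (lam ^ 2 - 0 ^ 2) := Real.sqrt_pos.2 (by nlinarith)
      positivity
    · positivity
  have hxlog : Continuous (fun μ : ℝ => (μ - η) * Real.log (μ - η)) :=
    Real.continuous_mul_log.comp (continuous_id.sub continuous_const)
  have hinv : ContinuousOn (fun μ : ℝ => (2 * η ^ 2 + lam ^ 2) /
      (Real.sqrt (lam ^ 2 - μ ^ 2) + Real.sqrt (lam ^ 2 - η ^ 2))) (Set.Icc 0 lam) :=
    ContinuousOn.div (by fun_prop) (by fun_prop) fun x hx => by positivity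
  have harc : Continuous (fun μ : ℝ => Real.arcsin (μ / lam)) :=
    Real.continuous_arcsin.comp (continuous_id.div_const lam)
  have hmain : ContinuousOn (fun μ : ℝ =>
      ((μ - η) * Real.log (μ + η) - (μ - η) * Real.log (μ - η)) *
        (-(2 / Real.pi) * ((μ + η) * (2 * Real.sqrt (lam ^ 2 - μ ^ 2) - (2 * η ^ 2 + lam ^ 2) /
          (Real.sqrt (lam ^ 2 - μ ^ 2) + Real.sqrt (lam ^ 2 - η ^ 2)))))
      - (4 / Real.pi) * ((2 * η ^ 2 + lam ^ 2) * Real.sqrt (lam ^ 2 - η ^ 2)) *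
        (Real.log (μ + η)
          - Real.log (Real.sqrt (lam ^ 2 - η ^ 2) * μ + η * Real.sqrt (lam ^ 2 - μ ^ 2)))
      - (4 * η / Real.pi) * (μ * Real.sqrt (lam ^ 2 - μ ^ 2) - 2 * η ^ 2 * Real.arcsin (μ / lam)))
      (Set.Icc 0 lam) := by
    refine ((ContinuousOn.mul (ContinuousOn.sub (ContinuousOn.mul (by fun_prop) hlogp)
      hxlog.continuousOn) (ContinuousOn.mul (by fun_prop) (ContinuousOn.mul (by fun_prop)
      (ContinuousOn.sub (by fun_prop) hinv)))).sub
      (ContinuousOn.mul (by fun_prop) (hlogp.sub hlogq))).sub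
      (ContinuousOn.mul (by fun_prop) (ContinuousOn.sub (by fun_prop)
        (harc.continuousOn.const_smul (2 * η ^ 2))))
  refine hmain.congr fun μ hμ => ?_
  have hs2 : Real.sqrt (lam ^ 2 - μ ^ 2) ^ 2 = lam ^ 2 - μ ^ 2 :=
    Real.sq_sqrt (by nlinarith [hμ.1, hμ.2])
  have hs0 := Real.sqrt_nonneg (lam ^ 2 - μ ^ 2)
  -- `V(μ) - V(η)` is divisible by `μ - η`, because `s - k = (η² - μ²) / (s + k)`.
  have key : (2 * μ ^ 2 + lam ^ 2) * Real.sqrt (lam ^ 2 - μ ^ 2)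
        - (2 * η ^ 2 + lam ^ 2) * Real.sqrt (lam ^ 2 - η ^ 2)
      = (μ - η) * ((μ + η) * (2 * Real.sqrt (lam ^ 2 - μ ^ 2) - (2 * η ^ 2 + lam ^ 2) /
          (Real.sqrt (lam ^ 2 - μ ^ 2) + Real.sqrt (lam ^ 2 - η ^ 2)))) := by
    generalize Real.sqrt (lam ^ 2 - μ ^ 2) = s at *
    generalize Real.sqrt (lam ^ 2 - η ^ 2) = k at *
    have : s + k ≠ 0 := by positivity
    field_simp
    linear_combination (2 * η ^ 2 + lam ^ 2) * (hs2 - hk2)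
  simp only [condensatePrimitive]
  rw [key]
  ring

lemma intervalIntegrable_condensate {lam η : ℝ} (hη0 : 0 < η) (hηlam : η < lam) :
    IntervalIntegrable (fun μ : ℝ => (Real.log (μ + η) - Real.log (μ - η)) *
        (6 * μ * (2 * μ ^ 2 - lam ^ 2) / (Real.pi * Real.sqrt (lam ^ 2 - μ ^ 2))))
      MeasureTheory.volume 0 lam := by
  have hlam : 0 < lam := hη0.trans hηlam
  -- Separate the singularity of the logarithm, at `η`, from that of the density, at `lam`.
  obtain ⟨m, hm1, hm2⟩ := exists_between hηlam
  have hm0 : 0 < m := hη0.trans hm1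
  refine IntervalIntegrable.trans (b := m) ?_ ?_
  · refine IntervalIntegrable.mul_continuousOn ?_ ?_
    · have h1 : IntervalIntegrable (fun μ : ℝ => Real.log (μ + η)) MeasureTheory.volume 0 m := by
        have := (intervalIntegral.intervalIntegrable_log' (a := η) (b := m + η)).comp_add_right η
        simpa using this
      have h2 : IntervalIntegrable (fun μ : ℝ => Real.log (μ - η)) MeasureTheory.volume 0 m := by
        have := (intervalIntegral.intervalIntegrable_log' (a := -η) (b := m - η)).comp_sub_right η
        simpa using this
      exact h1.sub h2
    · rw [Set.uIcc_of_le hm0.le]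
      refine ContinuousOn.div (by fun_prop) (by fun_prop) fun x hx => ?_
      have : 0 < Real.sqrt (lam ^ 2 - x ^ 2) := Real.sqrt_pos.2 (by nlinarith [hx.1, hx.2])
      positivity
  · have harc : IntervalIntegrable (fun μ : ℝ => 1 / Real.sqrt (lam ^ 2 - μ ^ 2))
        MeasureTheory.volume m lam := by
      refine intervalIntegral.intervalIntegrable_deriv_of_nonneg
        (g := fun μ : ℝ => Real.arcsin (μ / lam)) ?_ ?_ ?_
      · exact (Real.continuous_arcsin.comp (continuous_id.div_const lam)).continuousOn
      · intro x hx
        rw [min_eq_left hm2.le, max_eq_right hm2.le] at hx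
        exact hasDerivAt_arcsin_div (hm0.trans hx.1) hx.2
      · intro x _
        positivity
    have hc : ContinuousOn (fun μ : ℝ => (Real.log (μ + η) - Real.log (μ - η)) *
        (6 * μ * (2 * μ ^ 2 - lam ^ 2) / Real.pi)) (Set.uIcc m lam) := by
      rw [Set.uIcc_of_le hm2.le]
      refine ContinuousOn.mul (ContinuousOn.sub ?_ ?_) (by fun_prop)
      · exact ContinuousOn.log (by fun_prop) fun x hx => by linarith [hx.1]
      · exact ContinuousOn.log (by fun_prop) fun x hx => by linarith [hx.1]
    refine (harc.continuousOn_mul hc).congr fun μ _ => ?_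
    simp only [div_eq_mul_inv, mul_inv]
    ring

/-- Genus-0 KdV soliton condensate NDR for the spectral flux density:
for `0 < η < λ`, `∫₀^λ ln((μ+η)/|μ-η|) · 6μ(2μ²-λ²)/(π√(λ²-μ²)) dμ = 4η³`. -/
theorem genus0_condensate_NDR_v (lam η : ℝ) (hlam : 0 < lam)
    (hη0 : 0 < η) (hηlam : η < lam) :
    ∫ μ in (0:ℝ)..lam,
      Real.log ((μ + η) / |μ - η|) *
        (6 * μ * (2 * μ ^ 2 - lam ^ 2) / (Real.pi * Real.sqrt (lam ^ 2 - μ ^ 2))) =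
      4 * η ^ 3 := by
  have hcongr : ∫ μ in (0:ℝ)..lam,
      Real.log ((μ + η) / |μ - η|) *
        (6 * μ * (2 * μ ^ 2 - lam ^ 2) / (Real.pi * Real.sqrt (lam ^ 2 - μ ^ 2))) =
      ∫ μ in (0:ℝ)..lam, (Real.log (μ + η) - Real.log (μ - η)) *
        (6 * μ * (2 * μ ^ 2 - lam ^ 2) / (Real.pi * Real.sqrt (lam ^ 2 - μ ^ 2))) := by
    refine intervalIntegral.integral_congr_ae ?_
    -- At `μ = η` the two logarithmic factors have different junk values.
    filter_upwards [MeasureTheory.Measure.ae_ne MeasureTheory.volume η] with μ hne hμ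
    rw [Set.uIoc_of_le hlam.le] at hμ
    have h1 : μ + η ≠ 0 := by linarith [hμ.1]
    rw [Real.log_div h1 (abs_ne_zero.2 (sub_ne_zero.2 hne)), Real.log_abs]
  rw [hcongr, MeasureTheory.integral_eq_of_hasDerivAt_off_countable
    (condensatePrimitive lam η) _ (Set.countable_singleton η)
    (by rw [Set.uIcc_of_le hlam.le]; exact continuousOn_condensatePrimitive hη0 hηlam) ?_
    (intervalIntegrable_condensate hη0 hηlam)]
  · have hkp : 0 < Real.sqrt (lam ^ 2 - η ^ 2) := Real.sqrt_pos.2 (by nlinarith)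
    have hd : 0 < lam - η := sub_pos.2 hηlam
    have hlogk : Real.log (Real.sqrt (lam ^ 2 - η ^ 2))
        = (Real.log (lam + η) + Real.log (lam - η)) / 2 := by
      rw [Real.log_sqrt (by nlinarith), ← Real.log_mul (by positivity) hd.ne']
      congr 2
      ring
    have hsl : Real.sqrt (lam ^ 2) = lam := Real.sqrt_sq hlam.le
    have hpi := Real.pi_ne_zero
    simp only [condensatePrimitive, sub_self, Real.sqrt_zero, mul_zero, add_zero, zero_add,
      zero_sub, Real.log_neg_eq_log, zero_mul, zero_div, Real.arcsin_zero, div_self hlam.ne',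
      Real.arcsin_one, ne_eq, OfNat.ofNat_ne_zero, not_false_eq_true, zero_pow, sub_zero, hsl]
    rw [Real.log_mul hkp.ne' hlam.ne', Real.log_mul hη0.ne' hlam.ne', hlogk]
    field_simp
    ring
  · rintro μ ⟨hμ, hne⟩
    rw [min_eq_left hlam.le, max_eq_right hlam.le] at hμ
    exact hasDerivAt_condensatePrimitive hη0 hηlam hμ.1 hμ.2 hne
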